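/- There exists a constant C > 0 such that |E(q,V)| ≤ C ‖q‖_{H̃^{1/2}(Γ)} ‖V‖_X for all q ∈ H̃^{1/2}(Γ) and V ∈ X; that is, E is a bounded sesquilinear form on H̃^{1/2}(Γ) × X. -/

import Mathlib

noncomputable section

open MeasureTheory Complex Filter Topology
open scoped Real NNReal ContDiff

/-- The plane `ℝ²`. -/
abbrev R2 : Type := EuclideanSpace ℝ (Fin 2)

/-- Euclidean dot product on `ℝ²`. -/
def rdot (x ξ : R2) : ℝ := x 0 * ξ 0 + x 1 * ξ 1

/-- `testFT φ ξ = ∫ e^{i x·ξ} φ(x) dx`, the (inverse-type) Fourier integral of a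
test function `φ`. -/
def testFT (φ : R2 → ℂ) (ξ : R2) : ℂ :=
  ∫ x : R2, Complex.exp (Complex.I * (rdot x ξ : ℂ)) * φ x

/-- The squared `H^s(ℝ²)` norm of the distribution whose Fourier transform is `F`:
`‖f‖² = (2π)⁻² ∫ (1+|ξ|²)^s |f̂(ξ)|² dξ`. -/
def wnormSq (s : ℝ) (F : R2 → ℂ) : ℝ :=
  ((2 * π) ^ 2)⁻¹ * ∫ ξ : R2, ((1 : ℝ) + ‖ξ‖ ^ 2) ^ s * ‖F ξ‖ ^ 2

/-- The `H^s(ℝ²)` norm (Fourier-side representation). -/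
def wnorm (s : ℝ) (F : R2 → ℂ) : ℝ := Real.sqrt (wnormSq s F)

/-- `F` is the Fourier transform of an element of `H^s(ℝ²)`. -/
def MemHs (s : ℝ) (F : R2 → ℂ) : Prop :=
  AEStronglyMeasurable F (volume : Measure R2) ∧
    Integrable (fun ξ : R2 => ((1 : ℝ) + ‖ξ‖ ^ 2) ^ s * ‖F ξ‖ ^ 2) volume

/-- An element `f` of `H̃^s(Γ)`: a distribution on `ℝ²` of Sobolev regularity `s`
supported in the closure of `Γ`, represented by its Fourier transform `ft`
(a continuous function, `f` being a compactly supported distribution).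
The support condition is expressed by testing against smooth compactly supported
functions `φ` whose support avoids `closure Γ`, via the Parseval pairing
`∫ f φ dx = (2π)⁻² ∫ f̂(ξ) φ̌(ξ) dξ` with `φ̌(ξ) = ∫ e^{ix·ξ} φ(x) dx`. -/
structure HTildeElt (s : ℝ) (Γ : Set R2) where
  ft : R2 → ℂ
  cont : Continuous ft
  mem : Integrable (fun ξ : R2 => ((1 : ℝ) + ‖ξ‖ ^ 2) ^ s * ‖ft ξ‖ ^ 2) volume
  supp : ∀ φ : R2 → ℂ, ContDiff ℝ ∞ φ → HasCompactSupport φ →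
    tsupport φ ∩ closure Γ = ∅ → (∫ ξ : R2, ft ξ * testFT φ ξ) = 0

/-- `Γ` is a bounded Lipschitz domain in `ℝ²`: a nonempty bounded open set whose
boundary is locally, after a rigid motion, the graph of a Lipschitz function with
the domain on one side. -/
def IsLipschitzDomain (Γ : Set R2) : Prop :=
  IsOpen Γ ∧ Bornology.IsBounded Γ ∧ Γ.Nonempty ∧
    ∀ x ∈ frontier Γ, ∃ (e : R2 ≃ₗᵢ[ℝ] R2) (L : ℝ≥0) (f : ℝ → ℝ) (U : Set R2),
      LipschitzWith L f ∧ IsOpen U ∧ x ∈ U ∧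
        ∀ y ∈ U, (y ∈ Γ ↔ f (e y 0) < e y 1)

/-- `ξ·V̂(ξ)`, i.e. `-i` times the Fourier transform of `div V`. -/
def dotFt (F1 F2 : R2 → ℂ) (ξ : R2) : ℂ := (ξ 0 : ℂ) * F1 ξ + (ξ 1 : ℂ) * F2 ξ

/-- `ξ⊥·V̂(ξ)`, i.e. `-i` times the Fourier transform of `curl V`. -/
def curlFt (F1 F2 : R2 → ℂ) (ξ : R2) : ℂ := (ξ 1 : ℂ) * F1 ξ - (ξ 0 : ℂ) * F2 ξ

/-- An element of `X = H̃^{-1/2}_div(Γ)`: a pair of elements of `H̃^{-1/2}(Γ)`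
whose distributional divergence also belongs to `H̃^{-1/2}(Γ)`. -/
structure Xelt (Γ : Set R2) where
  c1 : HTildeElt (-(1/2) : ℝ) Γ
  c2 : HTildeElt (-(1/2) : ℝ) Γ
  divMem : Integrable (fun ξ : R2 =>
    ((1 : ℝ) + ‖ξ‖ ^ 2) ^ (-(1/2) : ℝ) * ‖dotFt c1.ft c2.ft ξ‖ ^ 2) volume

/-- The Fourier transform of `div V`. -/
def divFt {Γ : Set R2} (V : Xelt Γ) (ξ : R2) : ℂ :=
  Complex.I * dotFt V.c1.ft V.c2.ft ξ

/-- The squared `H`-norm `‖V‖²_H` of a vector field. -/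
def HnormSq {Γ : Set R2} (V : Xelt Γ) : ℝ :=
  wnormSq (-(1/2)) V.c1.ft + wnormSq (-(1/2)) V.c2.ft

/-- The squared `X`-norm `‖V‖²_X = ‖V‖²_H + ‖div V‖²_{H̃^{-1/2}}`. -/
def XnormSq {Γ : Set R2} (V : Xelt Γ) : ℝ :=
  HnormSq V + wnormSq (-(1/2)) (divFt V)

/-- The `X`-norm. -/
def Xnorm {Γ : Set R2} (V : Xelt Γ) : ℝ := Real.sqrt (XnormSq V)

/-- `ĝ₀(ξ) = i/√(k²-|ξ|²)`, with the branch `√(k²-|ξ|²) = i√(|ξ|²-k²)` for `|ξ| > k`. -/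
def g0hat (k : ℝ) (ξ : R2) : ℂ :=
  if ‖ξ‖ < k then Complex.I / ((Real.sqrt (k ^ 2 - ‖ξ‖ ^ 2) : ℝ) : ℂ)
  else 1 / ((Real.sqrt (‖ξ‖ ^ 2 - k ^ 2) : ℝ) : ℂ)

/-- The integrand of the sesquilinear form `B`:
`ĝ₀(ξ) [ (|ξ|²-k²) a₁ b̄₁ - k² a₂ b̄₂ ]` with `a₁ = ξ·Ŵ/|ξ|`, `a₂ = ξ⊥·Ŵ/|ξ|`, etc. -/
def Bintegrand (k : ℝ) (F1 F2 G1 G2 : R2 → ℂ) (ξ : R2) : ℂ :=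
  g0hat k ξ *
    (((‖ξ‖ ^ 2 - k ^ 2 : ℝ) : ℂ) * (dotFt F1 F2 ξ * starRingEnd ℂ (dotFt G1 G2 ξ)) -
      ((k ^ 2 : ℝ) : ℂ) * (curlFt F1 F2 ξ * starRingEnd ℂ (curlFt G1 G2 ξ))) /
    ((‖ξ‖ ^ 2 : ℝ) : ℂ)

/-- The sesquilinear form `B(W,V)`. -/
def Bform (k : ℝ) {Γ : Set R2} (W V : Xelt Γ) : ℂ :=
  ∫ ξ : R2, Bintegrand k W.c1.ft W.c2.ft V.c1.ft V.c2.ft ξ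

/-- The sesquilinear form `E(q,V) = B(curl⃗ q, V)`, where
`curl⃗ q = (∂q/∂x₂, -∂q/∂x₁)` has Fourier transform `(iξ₂ q̂, -iξ₁ q̂)`. -/
def Eform (k : ℝ) {Γ : Set R2} (q : HTildeElt (1/2 : ℝ) Γ) (V : Xelt Γ) : ℂ :=
  ∫ ξ : R2, Bintegrand k (fun η => Complex.I * (η 1 : ℂ) * q.ft η)
      (fun η => -(Complex.I * (η 0 : ℂ) * q.ft η)) V.c1.ft V.c2.ft ξ

/-- The inner product of the Hilbert space `X`; by the Riesz representation
theorem, every bounded conjugate-linear functional on `X` is `V ↦ Xinner Y V`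
for a unique `Y ∈ X`, with functional norm `Xnorm Y`. -/
def Xinner {Γ : Set R2} (Y V : Xelt Γ) : ℂ :=
  ((((2 * π) ^ 2)⁻¹ : ℝ) : ℂ) * ∫ ξ : R2, ((((1 : ℝ) + ‖ξ‖ ^ 2) ^ (-(1/2) : ℝ) : ℝ) : ℂ) *
    (Y.c1.ft ξ * starRingEnd ℂ (V.c1.ft ξ) + Y.c2.ft ξ * starRingEnd ℂ (V.c2.ft ξ) +
      divFt Y ξ * starRingEnd ℂ (divFt V ξ))

/-- `√(k²-|ξ|²)`, with the branch `i√(|ξ|²-k²)` for `|ξ| > k`. -/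
def rootk (k : ℝ) (ξ : R2) : ℂ :=
  if ‖ξ‖ < k then ((Real.sqrt (k ^ 2 - ‖ξ‖ ^ 2) : ℝ) : ℂ)
  else Complex.I * ((Real.sqrt (‖ξ‖ ^ 2 - k ^ 2) : ℝ) : ℂ)

/-- The Fourier multiplier `i/(2√(k²-|ξ|²))` of the Helmholtz single-layer
operator `T` with kernel `e^{ik|x-y|}/(4π|x-y|)`. -/
def mT (k : ℝ) (ξ : R2) : ℂ := Complex.I / (2 * rootk k ξ)

/-- The Fourier multiplier `1/(2|ξ|)` of the Laplace single-layer operator `T₀`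
with kernel `1/(4π|x-y|)`. -/
def mT0 (ξ : R2) : ℂ := 1 / (2 * ((‖ξ‖ : ℝ) : ℂ))

/-- The Fourier multiplier of `R = T - T₀`. -/
def mR (k : ℝ) (ξ : R2) : ℂ := mT k ξ - mT0 ξ

/-- The distributions with Fourier data `G` and `E` have the same restriction to
the open set `Γ`: `⟨G - E, φ⟩ = 0` for all smooth `φ` compactly supported in `Γ`
(pairing written on the Fourier side). -/
def AgreeOn (Γ : Set R2) (G E : R2 → ℂ) : Prop :=
  ∀ φ : R2 → ℂ, ContDiff ℝ ∞ φ → HasCompactSupport φ → tsupport φ ⊆ Γ →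
    (∫ ξ : R2, (G ξ - E ξ) * testFT φ ξ) = 0

/-- The duality pairing `⟨f, ψ⟩` between `H^{1/2}(Γ)` and `H̃^{-1/2}(Γ)`, written
on the Fourier side (Plancherel): `(2π)⁻² ∫ f̂(ξ) conj(ψ̂(ξ)) dξ`, where `G = f̂`
is the Fourier data of (an extension of) `f`. -/
def dualPair (G ψ : R2 → ℂ) : ℂ :=
  ((((2 * π) ^ 2)⁻¹ : ℝ) : ℂ) * ∫ ξ : R2, G ξ * starRingEnd ℂ (ψ ξ)

/-!
If `φ` is a cutoff equal to `1` near `Γ`, then `f = φ f` for every `f ∈ H̃^s(Γ)`; testing `f`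
against `e^{-ix·ξ} φ`, whose `H^{-s}` norm grows polynomially in `ξ`, bounds `|f̂(ξ)|` by
`‖f‖_{H^s}` times a power of `1 + |ξ|²`. The field `curl⃗ q` has no `ξ̂` component, so the integrand
of `E(q,V)` is at most `k² |ξ| |ĝ₀(ξ)| |q̂(ξ)| |V̂(ξ)|`. On the ball `|ξ| < 2k` the pointwise bound
applies, because the singularity of `ĝ₀` on the circle `|ξ| = k` is integrable; off that ball
`|ξ| |ĝ₀(ξ)| ≤ 2`, and the duality between `H^{1/2}` and `H^{-1/2}` finishes the estimate.
-/

open Module SchwartzMap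
open scoped FourierTransform

section ApproximateIdentity

variable {E : Type*} [NormedAddCommGroup E] [NormedSpace ℝ E]

lemma exists_schwartzMap_comp_smul (M : 𝓢(E, ℂ)) {c : ℝ} (hc : c ≠ 0) :
    ∃ M' : 𝓢(E, ℂ), ∀ x, M' x = M (c • x) :=
  ⟨compCLMOfContinuousLinearEquiv ℂ (ContinuousLinearEquiv.smulLeft (Units.mk0 c hc)) M,
    fun _ ↦ rfl⟩

lemma exists_one_add_norm_pow_mul_le (M : 𝓢(E, ℂ)) (n : ℕ) :
    ∃ C, ∀ x, (1 + ‖x‖) ^ n * ‖M x‖ ≤ C :=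
  ⟨_, fun x ↦ by
    simpa using one_add_le_sup_seminorm_apply (𝕜 := ℝ) (m := (n, 0)) le_rfl le_rfl M x⟩

lemma exists_norm_dilation_le (M : 𝓢(E, ℂ)) (N : ℕ) {δ : ℝ} (hδ : 0 < δ) :
    ∃ C, ∀ T : ℝ, 1 ≤ T → ∀ η, δ ≤ ‖η‖ →
      ‖(T : ℂ) ^ finrank ℝ E * M (T • η)‖ ≤ C * T⁻¹ * ((1 + ‖η‖ ^ 2) ^ N)⁻¹ := by
  set d := finrank ℝ E
  obtain ⟨C, hC⟩ := exists_one_add_norm_pow_mul_le M (2 * N + (d + 1))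
  refine ⟨C / δ ^ (d + 1), fun T hT η hη ↦ ?_⟩
  have hT0 : 0 < T := by linarith
  have hnorm : ‖T • η‖ = T * ‖η‖ := by rw [norm_smul, Real.norm_of_nonneg hT0.le]
  have hweight : (1 + ‖η‖ ^ 2) ^ N ≤ (1 + ‖T • η‖) ^ (2 * N) := by
    rw [pow_mul]
    have : ‖η‖ ≤ ‖T • η‖ := hnorm ▸ le_mul_of_one_le_left (norm_nonneg η) hT
    gcongr
    nlinarith [norm_nonneg η]
  have hgain : (T * δ) ^ (d + 1) ≤ (1 + ‖T • η‖) ^ (d + 1) := by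
    have : T * δ ≤ T * ‖η‖ := by gcongr
    gcongr
    linarith
  have hdecay : (1 + ‖η‖ ^ 2) ^ N * (T * δ) ^ (d + 1) * ‖M (T • η)‖ ≤ C := by
    refine le_trans ?_ (hC (T • η))
    rw [pow_add _ (2 * N) (d + 1)]
    gcongr
  rw [norm_mul, norm_pow, norm_real, Real.norm_of_nonneg hT0.le, ← div_eq_mul_inv,
    ← div_eq_mul_inv, div_div, div_div, le_div_iff₀ (by positivity)]
  calc T ^ d * ‖M (T • η)‖ * (δ ^ (d + 1) * (T * (1 + ‖η‖ ^ 2) ^ N))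
      = (1 + ‖η‖ ^ 2) ^ N * (T * δ) ^ (d + 1) * ‖M (T • η)‖ := by ring
    _ ≤ C := hdecay

lemma exists_continuous_bounded_eqOn_ball [FiniteDimensional ℝ E] {F : E → ℂ}
    (hF : Continuous F) :
    ∃ G : E → ℂ, Continuous G ∧ (∃ B, ∀ η, ‖G η‖ ≤ B) ∧ (∀ η, ‖G η‖ ≤ ‖F η‖) ∧
      ∀ η, ‖η‖ < 1 → G η = F η := by
  let χ : ContDiffBump (0 : E) := ⟨1, 2, one_pos, one_lt_two⟩
  have hG : Continuous fun η ↦ (χ η : ℂ) * F η := (continuous_ofReal.comp χ.continuous).mul hF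
  have hGc : HasCompactSupport fun η ↦ (χ η : ℂ) * F η :=
    (χ.hasCompactSupport.comp_left (g := ((↑) : ℝ → ℂ)) ofReal_zero).mul_right
  refine ⟨_, hG, hGc.exists_bound_of_continuous hG, fun η ↦ ?_, fun η hη ↦ ?_⟩
  · rw [norm_mul, norm_real, Real.norm_of_nonneg χ.nonneg]
    exact mul_le_of_le_one_left (norm_nonneg _) χ.le_one
  · rw [χ.one_of_mem_closedBall (mem_closedBall_zero_iff.2 hη.le), ofReal_one, one_mul]

variable [MeasurableSpace E] {μ : Measure E}

lemma tendsto_integral_mul_dilation_of_eq_zero_near {H : E → ℂ} {N : ℕ}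
    (hH : Integrable (fun η ↦ ((1 + ‖η‖ ^ 2) ^ N)⁻¹ * ‖H η‖) μ) {δ : ℝ} (hδ : 0 < δ)
    (hnear : ∀ η, ‖η‖ < δ → H η = 0) (M : 𝓢(E, ℂ)) :
    Tendsto (fun T : ℝ ↦ ∫ η, H η * ((T : ℂ) ^ finrank ℝ E * M (T • η)) ∂μ) atTop (𝓝 0) := by
  obtain ⟨C, hC⟩ := exists_norm_dilation_le M N hδ
  have hlim : Tendsto (fun T : ℝ ↦ C * T⁻¹ * ∫ η, ((1 + ‖η‖ ^ 2) ^ N)⁻¹ * ‖H η‖ ∂μ) atTop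
      (𝓝 0) := by
    simpa using (tendsto_inv_atTop_zero.const_mul C).mul_const _
  refine squeeze_zero_norm' ?_ hlim
  filter_upwards [eventually_ge_atTop 1] with T hT
  rw [← integral_const_mul]
  refine norm_integral_le_of_norm_le (hH.const_mul _) (.of_forall fun η ↦ ?_)
  rcases lt_or_ge ‖η‖ δ with hη | hη
  · simp [hnear η hη]
  · rw [norm_mul, ← mul_assoc, mul_comm]
    exact mul_le_mul_of_nonneg_right (hC T hT η hη) (norm_nonneg _)

lemma integrable_mul_schwartzMap [OpensMeasurableSpace E] {F : E → ℂ}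
    (hF : AEStronglyMeasurable F μ) {N : ℕ}
    (hFi : Integrable (fun η ↦ ((1 + ‖η‖ ^ 2) ^ N)⁻¹ * ‖F η‖) μ) (M : 𝓢(E, ℂ)) :
    Integrable (fun η ↦ F η * M η) μ := by
  obtain ⟨C, hC⟩ := exists_one_add_norm_pow_mul_le M (2 * N)
  refine (hFi.const_mul C).mono' (hF.mul M.continuous.aestronglyMeasurable)
    (.of_forall fun η ↦ ?_)
  have hweight : (1 + ‖η‖ ^ 2) ^ N * ‖M η‖ ≤ C := by
    refine le_trans ?_ (hC η)
    rw [pow_mul]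
    gcongr
    nlinarith [norm_nonneg η]
  have hM : ‖M η‖ ≤ C * ((1 + ‖η‖ ^ 2) ^ N)⁻¹ := by
    rwa [← div_eq_mul_inv, le_div_iff₀' (by positivity)]
  calc ‖F η * M η‖ ≤ ‖F η‖ * (C * ((1 + ‖η‖ ^ 2) ^ N)⁻¹) := by rw [norm_mul]; gcongr
    _ = C * (((1 + ‖η‖ ^ 2) ^ N)⁻¹ * ‖F η‖) := by ring

lemma integrable_mul_dilation [OpensMeasurableSpace E] {F : E → ℂ}
    (hF : AEStronglyMeasurable F μ) {N : ℕ}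
    (hFi : Integrable (fun η ↦ ((1 + ‖η‖ ^ 2) ^ N)⁻¹ * ‖F η‖) μ) (M : 𝓢(E, ℂ)) {T : ℝ}
    (hT : 0 < T) :
    Integrable (fun η ↦ F η * ((T : ℂ) ^ finrank ℝ E * M (T • η))) μ := by
  obtain ⟨M', hM'⟩ := exists_schwartzMap_comp_smul M hT.ne'
  simpa only [hM', mul_left_comm] using
    (integrable_mul_schwartzMap hF hFi M').const_mul ((T : ℂ) ^ finrank ℝ E)

variable [FiniteDimensional ℝ E] [BorelSpace E] [μ.IsAddHaarMeasure]

lemma integral_mul_dilation (G M : E → ℂ) {T : ℝ} (hT : 0 < T) :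
    ∫ η, G η * ((T : ℂ) ^ finrank ℝ E * M (T • η)) ∂μ = ∫ u, G (T⁻¹ • u) * M u ∂μ := by
  have hTd : (T : ℂ) ^ finrank ℝ E ≠ 0 := pow_ne_zero _ (ofReal_ne_zero.2 hT.ne')
  calc ∫ η, G η * ((T : ℂ) ^ finrank ℝ E * M (T • η)) ∂μ
      = ∫ η, (T : ℂ) ^ finrank ℝ E * (G (T⁻¹ • (T • η)) * M (T • η)) ∂μ := by
        simp only [inv_smul_smul₀ hT.ne', mul_left_comm]
    _ = ∫ u, G (T⁻¹ • u) * M u ∂μ := by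
        rw [integral_const_mul, Measure.integral_comp_smul_of_nonneg μ
          (fun u ↦ G (T⁻¹ • u) * M u) T (hR := hT.le), real_smul, ofReal_inv, ofReal_pow,
          mul_inv_cancel_left₀ hTd]

lemma tendsto_integral_mul_dilation_of_bounded {G M : E → ℂ} (hG : Continuous G) {B : ℝ}
    (hB : ∀ η, ‖G η‖ ≤ B) (hM : Integrable M μ) :
    Tendsto (fun T : ℝ ↦ ∫ η, G η * ((T : ℂ) ^ finrank ℝ E * M (T • η)) ∂μ) atTop
      (𝓝 (G 0 * ∫ u, M u ∂μ)) := by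
  have hlim : Tendsto (fun T : ℝ ↦ ∫ u, G (T⁻¹ • u) * M u ∂μ) atTop
      (𝓝 (∫ u, G 0 * M u ∂μ)) := by
    refine tendsto_integral_filter_of_dominated_convergence (fun u ↦ B * ‖M u‖)
      (.of_forall fun T ↦ ?_) (.of_forall fun T ↦ .of_forall fun u ↦ ?_)
      (hM.norm.const_mul B) (.of_forall fun u ↦ ?_)
    · have hGT : Continuous fun u ↦ G (T⁻¹ • u) := by fun_prop
      exact hGT.aestronglyMeasurable.mul hM.aestronglyMeasurable
    · rw [norm_mul]
      exact mul_le_mul_of_nonneg_right (hB _) (norm_nonneg _)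
    · have hu : Tendsto (fun T : ℝ ↦ T⁻¹ • u) atTop (𝓝 0) := by
        simpa using (tendsto_inv_atTop_zero (𝕜 := ℝ)).smul_const u
      exact ((hG.tendsto 0).comp hu).mul_const (M u)
  rw [integral_const_mul] at hlim
  refine hlim.congr' ?_
  filter_upwards [eventually_gt_atTop 0] with T hT using (integral_mul_dilation G M hT).symm

-- A cutoff splits `F` into a bounded part, treated by dominated convergence, and a part vanishing
-- near the origin, treated by the decay of `M`.
theorem tendsto_integral_mul_dilation {F : E → ℂ} (hF : Continuous F) {N : ℕ}
    (hFi : Integrable (fun η ↦ ((1 + ‖η‖ ^ 2) ^ N)⁻¹ * ‖F η‖) μ) (M : 𝓢(E, ℂ)) :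
    Tendsto (fun T : ℝ ↦ ∫ η, F η * ((T : ℂ) ^ finrank ℝ E * M (T • η)) ∂μ) atTop
      (𝓝 (F 0 * ∫ u, M u ∂μ)) := by
  obtain ⟨G, hG, ⟨B, hB⟩, hGF, hnear⟩ := exists_continuous_bounded_eqOn_ball hF
  have hGi : Integrable (fun η ↦ ((1 + ‖η‖ ^ 2) ^ N)⁻¹ * ‖G η‖) μ := by
    refine hFi.mono (by fun_prop (disch := intros; positivity)) (.of_forall fun η ↦ ?_)
    simp only [norm_mul, norm_norm]
    gcongr
    exact hGF η
  have hH : Continuous fun η ↦ F η - G η := hF.sub hG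
  have hHi : Integrable (fun η ↦ ((1 + ‖η‖ ^ 2) ^ N)⁻¹ * ‖F η - G η‖) μ := by
    refine (hFi.add hGi).mono' (by fun_prop (disch := intros; positivity)) (.of_forall fun η ↦ ?_)
    rw [norm_mul, norm_norm, Real.norm_of_nonneg (by positivity), Pi.add_apply, ← mul_add]
    gcongr
    exact norm_sub_le _ _
  have hlim := (tendsto_integral_mul_dilation_of_bounded hG hB (M.integrable (μ := μ))).add
    (tendsto_integral_mul_dilation_of_eq_zero_near hHi one_pos
      (fun η hη ↦ by rw [hnear η hη, sub_self]) M)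
  rw [add_zero, hnear 0 (by simp)] at hlim
  refine hlim.congr' ?_
  filter_upwards [eventually_gt_atTop 0] with T hT
  rw [← integral_add (integrable_mul_dilation hG.aestronglyMeasurable hGi M hT)
    (integrable_mul_dilation hH.aestronglyMeasurable hHi M hT)]
  simp only [← add_mul, add_sub_cancel]

end ApproximateIdentity

section SobolevWeights

lemma one_add_norm_sq_le_mul {E : Type*} [SeminormedAddCommGroup E] (x y : E) :
    1 + ‖x‖ ^ 2 ≤ 2 * (1 + ‖y‖ ^ 2) * (1 + ‖x + y‖ ^ 2) := by
  have hx : ‖x‖ ≤ ‖x + y‖ + ‖y‖ := by simpa using norm_sub_le (x + y) y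
  nlinarith [norm_nonneg x, sq_nonneg (‖x + y‖ - ‖y‖), sq_nonneg (‖x + y‖ * ‖y‖)]

theorem peetre_inequality {E : Type*} [SeminormedAddCommGroup E] (s : ℝ) (x y : E) :
    (1 + ‖x‖ ^ 2) ^ s ≤ (2 * (1 + ‖y‖ ^ 2)) ^ |s| * (1 + ‖x + y‖ ^ 2) ^ s := by
  rcases le_total 0 s with hs | hs
  · rw [abs_of_nonneg hs, ← Real.mul_rpow (by positivity) (by positivity)]
    gcongr
    exact one_add_norm_sq_le_mul x y
  · have hxy : 1 + ‖x + y‖ ^ 2 ≤ 2 * (1 + ‖y‖ ^ 2) * (1 + ‖x‖ ^ 2) := by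
      simpa using one_add_norm_sq_le_mul (x + y) (-y)
    have hpow := Real.rpow_le_rpow (by positivity) hxy (neg_nonneg.2 hs)
    rw [Real.mul_rpow (by positivity) (by positivity), Real.rpow_neg (by positivity),
      Real.rpow_neg (x := 1 + ‖x‖ ^ 2) (by positivity)] at hpow
    rw [abs_of_nonpos hs]
    field_simp at hpow ⊢
    exact hpow

variable {s : ℝ} {F G : R2 → ℂ}

lemma continuous_one_add_norm_sq_rpow (s : ℝ) : Continuous fun ξ : R2 ↦ (1 + ‖ξ‖ ^ 2) ^ s :=
  (by fun_prop : Continuous fun ξ : R2 ↦ 1 + ‖ξ‖ ^ 2).rpow_const fun _ ↦ .inl (by positivity)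

lemma sq_rpow_half_mul_norm (s : ℝ) (F : R2 → ℂ) (ξ : R2) :
    ((1 + ‖ξ‖ ^ 2) ^ (s / 2) * ‖F ξ‖) ^ 2 = (1 + ‖ξ‖ ^ 2) ^ s * ‖F ξ‖ ^ 2 := by
  rw [mul_pow, ← Real.rpow_mul_natCast (by positivity), Nat.cast_ofNat,
    div_mul_cancel₀ s two_ne_zero]

lemma memHs_iff_memLp (hF : AEStronglyMeasurable F) :
    MemHs s F ↔ MemLp (fun ξ ↦ (1 + ‖ξ‖ ^ 2) ^ (s / 2) * ‖F ξ‖) 2 := by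
  have hmeas : AEStronglyMeasurable fun ξ : R2 ↦ (1 + ‖ξ‖ ^ 2) ^ (s / 2) * ‖F ξ‖ :=
    (continuous_one_add_norm_sq_rpow _).aestronglyMeasurable.mul hF.norm
  rw [memLp_two_iff_integrable_sq hmeas, MemHs, and_iff_right hF]
  simp only [sq_rpow_half_mul_norm]

lemma wnormSq_nonneg (s : ℝ) (F : R2 → ℂ) : 0 ≤ wnormSq s F :=
  mul_nonneg (by positivity) (integral_nonneg fun ξ ↦ by positivity)

lemma wnorm_nonneg (s : ℝ) (F : R2 → ℂ) : 0 ≤ wnorm s F := Real.sqrt_nonneg _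

lemma two_pi_mul_wnorm (s : ℝ) (F : R2 → ℂ) :
    2 * π * wnorm s F = √(∫ ξ, (1 + ‖ξ‖ ^ 2) ^ s * ‖F ξ‖ ^ 2) := by
  rw [wnorm, wnormSq, Real.sqrt_mul (by positivity), Real.sqrt_inv, Real.sqrt_sq (by positivity),
    mul_inv_cancel_left₀ (by positivity)]

lemma rpow_half_mul_norm_mul (s : ℝ) (F G : R2 → ℂ) (ξ : R2) :
    (1 + ‖ξ‖ ^ 2) ^ (s / 2) * ‖F ξ‖ * ((1 + ‖ξ‖ ^ 2) ^ (-s / 2) * ‖G ξ‖) = ‖F ξ‖ * ‖G ξ‖ := by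
  have hone : (1 + ‖ξ‖ ^ 2) ^ (s / 2) * (1 + ‖ξ‖ ^ 2) ^ (-s / 2) = 1 := by
    rw [← Real.rpow_add (by positivity), neg_div, add_neg_cancel, Real.rpow_zero]
  rw [mul_mul_mul_comm, hone, one_mul]

namespace MemHs

lemma integrable_norm_mul_norm (hF : MemHs s F) (hG : MemHs (-s) G) :
    Integrable fun ξ ↦ ‖F ξ‖ * ‖G ξ‖ := by
  simpa only [Pi.mul_def, rpow_half_mul_norm_mul] using
    ((memHs_iff_memLp hF.1).1 hF).integrable_mul ((memHs_iff_memLp hG.1).1 hG)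

theorem integral_norm_mul_norm_le (hF : MemHs s F) (hG : MemHs (-s) G) :
    ∫ ξ, ‖F ξ‖ * ‖G ξ‖ ≤ (2 * π) ^ 2 * wnorm s F * wnorm (-s) G := by
  have hCS := integral_mul_le_Lp_mul_Lq_of_nonneg (μ := (volume : Measure R2))
    Real.HolderConjugate.two_two
    (f := fun ξ ↦ (1 + ‖ξ‖ ^ 2) ^ (s / 2) * ‖F ξ‖)
    (g := fun ξ ↦ (1 + ‖ξ‖ ^ 2) ^ (-s / 2) * ‖G ξ‖)
    (.of_forall fun ξ ↦ by positivity) (.of_forall fun ξ ↦ by positivity)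
    (by simpa using (memHs_iff_memLp hF.1).1 hF) (by simpa using (memHs_iff_memLp hG.1).1 hG)
  simp only [Real.rpow_two, sq_rpow_half_mul_norm, rpow_half_mul_norm_mul, ← Real.sqrt_eq_rpow,
    ← two_pi_mul_wnorm] at hCS
  linarith

end MemHs

lemma memHs_schwartzMap (s : ℝ) (M : 𝓢(R2, ℂ)) : MemHs s M := by
  have hgrowth : (fun ξ : R2 ↦ (1 + ‖ξ‖ ^ 2) ^ (s / 2)).HasTemperateGrowth :=
    Function.hasTemperateGrowth_one_add_norm_sq_rpow R2 (s / 2)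
  rw [memHs_iff_memLp M.continuous.aestronglyMeasurable]
  refine (((smulLeftCLM ℂ fun ξ : R2 ↦ (1 + ‖ξ‖ ^ 2) ^ (s / 2)) M).memLp 2).norm.congr_norm
    ((continuous_one_add_norm_sq_rpow _).mul M.continuous.norm).aestronglyMeasurable
    (.of_forall fun ξ ↦ ?_)
  simp [smulLeftCLM_apply_apply hgrowth]

lemma MemHs.exists_integrable_inv_pow_mul_norm (hF : MemHs s F) :
    ∃ N : ℕ, Integrable fun ξ ↦ ((1 + ‖ξ‖ ^ 2) ^ N)⁻¹ * ‖F ξ‖ := by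
  obtain ⟨N, hN⟩ := exists_nat_gt ((1 - s) / 2)
  have hG : MemHs (-s) fun ξ ↦ ((((1 + ‖ξ‖ ^ 2) ^ N)⁻¹ : ℝ) : ℂ) := by
    refine ⟨by fun_prop (disch := intros; positivity), ?_⟩
    have hN : (finrank ℝ R2 : ℝ) < 2 * (s + 2 * N) := by
      rw [finrank_euclideanSpace_fin, Nat.cast_ofNat]
      linarith
    refine (integrable_rpow_neg_one_add_norm_sq hN).congr (.of_forall fun ξ ↦ ?_)
    dsimp only
    rw [norm_real, Real.norm_of_nonneg (by positivity), inv_pow, ← pow_mul,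
      ← Real.rpow_natCast _ (N * 2), ← Real.rpow_neg (by positivity),
      ← Real.rpow_add (by positivity)]
    congr 1
    push_cast
    ring
  refine ⟨N, (hF.integrable_norm_mul_norm hG).congr (.of_forall fun ξ ↦ ?_)⟩
  dsimp only
  rw [norm_real, Real.norm_of_nonneg (by positivity), mul_comm]

lemma one_add_norm_sq_rpow_mul_comp_add_le (s : ℝ) (F : R2 → ℂ) (ξ η : R2) :
    (1 + ‖η‖ ^ 2) ^ s * ‖F (η + ξ)‖ ^ 2 ≤
      (2 * (1 + ‖ξ‖ ^ 2)) ^ |s| * ((1 + ‖η + ξ‖ ^ 2) ^ s * ‖F (η + ξ)‖ ^ 2) := by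
  rw [← mul_assoc]
  gcongr
  exact peetre_inequality s η ξ

lemma MemHs.comp_add_right (hF : MemHs s F) (ξ : R2) : MemHs s fun η ↦ F (η + ξ) := by
  have hmeas : AEStronglyMeasurable fun η ↦ F (η + ξ) :=
    hF.1.comp_measurePreserving (measurePreserving_add_right volume ξ)
  refine ⟨hmeas, ((hF.2.comp_add_right ξ).const_mul ((2 * (1 + ‖ξ‖ ^ 2)) ^ |s|)).mono'
    ((continuous_one_add_norm_sq_rpow s).aestronglyMeasurable.mul (hmeas.norm.pow 2))
    (.of_forall fun η ↦ ?_)⟩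
  rw [Real.norm_of_nonneg (by positivity)]
  exact one_add_norm_sq_rpow_mul_comp_add_le s F ξ η

lemma MemHs.wnorm_comp_add_right_le (hF : MemHs s F) (ξ : R2) :
    wnorm s (fun η ↦ F (η + ξ)) ≤ (2 * (1 + ‖ξ‖ ^ 2)) ^ (|s| / 2) * wnorm s F := by
  have hint : ∫ η, (1 + ‖η‖ ^ 2) ^ s * ‖F (η + ξ)‖ ^ 2 ≤
      (2 * (1 + ‖ξ‖ ^ 2)) ^ |s| * ∫ η, (1 + ‖η‖ ^ 2) ^ s * ‖F η‖ ^ 2 := by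
    rw [← integral_const_mul, ← integral_add_right_eq_self
      (fun η ↦ (2 * (1 + ‖ξ‖ ^ 2)) ^ |s| * ((1 + ‖η‖ ^ 2) ^ s * ‖F η‖ ^ 2)) ξ]
    exact integral_mono (hF.comp_add_right ξ).2 ((hF.2.comp_add_right ξ).const_mul _)
      (one_add_norm_sq_rpow_mul_comp_add_le s F ξ)
  have hsq : wnormSq s (fun η ↦ F (η + ξ)) ≤ (2 * (1 + ‖ξ‖ ^ 2)) ^ |s| * wnormSq s F := by
    rw [wnormSq, wnormSq, mul_left_comm]
    gcongr
  calc wnorm s (fun η ↦ F (η + ξ)) ≤ √((2 * (1 + ‖ξ‖ ^ 2)) ^ |s| * wnormSq s F) :=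
        Real.sqrt_le_sqrt hsq
    _ = (2 * (1 + ‖ξ‖ ^ 2)) ^ (|s| / 2) * wnorm s F := by
        rw [Real.sqrt_mul (by positivity), Real.sqrt_eq_rpow, ← Real.rpow_mul (by positivity),
          mul_one_div, wnorm]

end SobolevWeights

section TestFT

variable {φ ψ : R2 → ℂ}

lemma testFT_sub (hφ : Integrable φ) (hψ : Integrable ψ) (η : R2) :
    testFT (fun x ↦ φ x - ψ x) η = testFT φ η - testFT ψ η := by
  have hint {χ : R2 → ℂ} (hχ : Integrable χ) :
      Integrable fun x ↦ cexp (I * rdot x η) * χ x := by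
    refine hχ.bdd_mul (c := 1) ?_ (.of_forall fun x ↦ ?_)
    · unfold rdot
      fun_prop
    · rw [mul_comm, norm_exp_ofReal_mul_I]
  simp only [testFT, mul_sub]
  exact integral_sub (hint hφ) (hint hψ)

lemma testFT_comp_inv_smul (φ : R2 → ℂ) {T : ℝ} (hT : 0 < T) (η : R2) :
    testFT (fun x ↦ φ (T⁻¹ • x)) η = (T : ℂ) ^ 2 * testFT φ (T • η) := by
  have hdot (x : R2) : rdot (T⁻¹ • x) (T • η) = rdot x η := by
    simp only [rdot, PiLp.smul_apply, smul_eq_mul]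
    field_simp
  have hsub := Measure.integral_comp_inv_smul_of_nonneg (volume : Measure R2)
    (fun y ↦ cexp (I * rdot y (T • η)) * φ y) hT.le
  simpa only [testFT, hdot, finrank_euclideanSpace_fin, real_smul, ofReal_pow] using hsub

lemma testFT_exp_mul (φ : R2 → ℂ) (ξ η : R2) :
    testFT (fun x ↦ cexp (-(I * rdot x ξ)) * φ x) η = testFT φ (η - ξ) := by
  refine integral_congr_ae (.of_forall fun x ↦ ?_)
  dsimp only
  rw [← mul_assoc, ← Complex.exp_add]
  congr 2
  simp only [rdot, PiLp.sub_apply]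
  push_cast
  ring

lemma testFT_eq_fourierInv (φ : R2 → ℂ) (η : R2) : testFT φ η = 𝓕⁻ φ ((2 * π)⁻¹ • η) := by
  rw [Real.fourierInv_eq']
  refine integral_congr_ae (.of_forall fun x ↦ ?_)
  dsimp only
  rw [smul_eq_mul, inner_smul_right, mul_inv_cancel_left₀ (by positivity), mul_comm I]
  simp [rdot, PiLp.inner_apply, Fin.sum_univ_two, mul_comm]

lemma exists_schwartzMap_eq_testFT (hφ : ContDiff ℝ ∞ φ) (hc : HasCompactSupport φ) :
    ∃ M : 𝓢(R2, ℂ), ∀ η, M η = testFT φ η := by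
  obtain ⟨M, hM⟩ := exists_schwartzMap_comp_smul (𝓕⁻ (hc.toSchwartzMap hφ))
    (inv_ne_zero Real.two_pi_pos.ne')
  refine ⟨M, fun η ↦ ?_⟩
  rw [hM, testFT_eq_fourierInv, SchwartzMap.fourierInv_coe]
  rfl

lemma integral_testFT (hφ : ContDiff ℝ ∞ φ) (hc : HasCompactSupport φ) :
    ∫ η, testFT φ η = (2 * π) ^ 2 * φ 0 := by
  have hcoe : ⇑(hc.toSchwartzMap hφ) = φ := rfl
  have hzero : ∫ η, 𝓕⁻ φ η = φ 0 := by
    have hinv : 𝓕 (𝓕⁻ (hc.toSchwartzMap hφ)) 0 = φ 0 := by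
      rw [FourierTransform.fourier_fourierInv_eq, hcoe]
    rw [SchwartzMap.fourier_coe, SchwartzMap.fourierInv_coe, hcoe, Real.fourier_eq'] at hinv
    simpa using hinv
  simp only [testFT_eq_fourierInv]
  rw [Measure.integral_comp_inv_smul_of_nonneg volume (𝓕⁻ φ) Real.two_pi_pos.le, hzero,
    finrank_euclideanSpace_fin, real_smul]
  push_cast
  rfl

end TestFT

namespace HTildeElt

variable {s : ℝ} {Γ : Set R2}

lemma memHs (f : HTildeElt s Γ) : MemHs s f.ft := ⟨f.cont.aestronglyMeasurable, f.mem⟩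

variable {φ ψ : R2 → ℂ}

lemma integrable_ft_mul_testFT (f : HTildeElt s Γ) (hφ : ContDiff ℝ ∞ φ)
    (hc : HasCompactSupport φ) : Integrable fun η ↦ f.ft η * testFT φ η := by
  obtain ⟨M, hM⟩ := exists_schwartzMap_eq_testFT hφ hc
  obtain ⟨N, hN⟩ := f.memHs.exists_integrable_inv_pow_mul_norm
  simpa only [hM] using integrable_mul_schwartzMap f.cont.aestronglyMeasurable hN M

lemma integral_ft_mul_testFT_congr (f : HTildeElt s Γ) (hφ : ContDiff ℝ ∞ φ)
    (hφc : HasCompactSupport φ) (hψ : ContDiff ℝ ∞ ψ) (hψc : HasCompactSupport ψ) {U : Set R2}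
    (hU : IsOpen U) (hΓU : closure Γ ⊆ U) (hφψ : Set.EqOn φ ψ U) :
    ∫ η, f.ft η * testFT φ η = ∫ η, f.ft η * testFT ψ η := by
  have hsupp : tsupport (fun x ↦ φ x - ψ x) ∩ closure Γ = ∅ := by
    rw [← Set.disjoint_iff_inter_eq_empty]
    refine (Disjoint.closure_left ?_ hU).mono_right hΓU
    exact Set.disjoint_left.2 fun x hx hxU ↦ hx (sub_eq_zero.2 (hφψ hxU))
  have hzero := f.supp _ (hφ.sub hψ) (hφc.sub hψc) hsupp
  simp only [testFT_sub (hφ.continuous.integrable_of_hasCompactSupport hφc)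
    (hψ.continuous.integrable_of_hasCompactSupport hψc), mul_sub] at hzero
  rwa [integral_sub (f.integrable_ft_mul_testFT hφ hφc) (f.integrable_ft_mul_testFT hψ hψc),
    sub_eq_zero] at hzero

-- The pairing does not change when `φ` is replaced by `φ (T⁻¹ • ·)` with `1 ≤ T`, whose Fourier
-- integral is an approximate identity as `T → ∞`.
theorem integral_ft_mul_testFT_of_eq_one (f : HTildeElt s Γ) {r : ℝ}
    (hΓ : closure Γ ⊆ Metric.ball 0 r) (hr : 0 < r) (hφ : ContDiff ℝ ∞ φ)
    (hc : HasCompactSupport φ) (hφ1 : ∀ x ∈ Metric.ball 0 r, φ x = 1) :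
    ∫ η, f.ft η * testFT φ η = (2 * π) ^ 2 * f.ft 0 := by
  obtain ⟨M, hM⟩ := exists_schwartzMap_eq_testFT hφ hc
  obtain ⟨N, hN⟩ := f.memHs.exists_integrable_inv_pow_mul_norm
  have hlim := tendsto_integral_mul_dilation f.cont hN M
  simp only [hM, integral_testFT hφ hc, hφ1 0 (Metric.mem_ball_self hr), mul_one,
    finrank_euclideanSpace_fin] at hlim
  rw [mul_comm]
  refine tendsto_nhds_unique (tendsto_const_nhds.congr' ?_) hlim
  filter_upwards [eventually_ge_atTop 1] with T hT
  have hT0 : 0 < T := one_pos.trans_le hT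
  simp only [← testFT_comp_inv_smul φ hT0]
  refine f.integral_ft_mul_testFT_congr hφ hc (hφ.comp (contDiff_const_smul T⁻¹))
    (hc.comp_smul (inv_ne_zero hT0.ne')) Metric.isOpen_ball hΓ fun x hx ↦ ?_
  have hTx : T⁻¹ • x ∈ Metric.ball (0 : R2) r := by
    rw [mem_ball_zero_iff] at hx ⊢
    rw [norm_smul, norm_inv, Real.norm_of_nonneg hT0.le]
    exact (mul_le_of_le_one_left (norm_nonneg x) (inv_le_one_of_one_le₀ hT)).trans_lt hx
  rw [hφ1 x hx, hφ1 _ hTx]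

lemma exists_norm_ft_zero_le (s : ℝ) (hΓ : Bornology.IsBounded Γ) :
    ∃ A, 0 ≤ A ∧ ∀ f : HTildeElt s Γ, ‖f.ft 0‖ ≤ A * wnorm s f.ft := by
  obtain ⟨r, hr, hΓr⟩ := hΓ.closure.subset_ball_lt 0 0
  let χ : ContDiffBump (0 : R2) := ⟨r, r + 1, hr, lt_add_one r⟩
  have hχ : ContDiff ℝ ∞ fun x ↦ (χ x : ℂ) := ofRealCLM.contDiff.comp χ.contDiff
  have hχc : HasCompactSupport fun x ↦ (χ x : ℂ) :=
    χ.hasCompactSupport.comp_left (g := ((↑) : ℝ → ℂ)) ofReal_zero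
  have hχ1 : ∀ x ∈ Metric.ball 0 r, (χ x : ℂ) = 1 := fun x hx ↦ by
    rw [χ.one_of_mem_closedBall (Metric.ball_subset_closedBall hx), ofReal_one]
  obtain ⟨M, hM⟩ := exists_schwartzMap_eq_testFT hχ hχc
  refine ⟨wnorm (-s) M, wnorm_nonneg _ _, fun f ↦ ?_⟩
  have hpair := f.integral_ft_mul_testFT_of_eq_one hΓr hr hχ hχc hχ1
  simp only [← hM] at hpair
  refine le_of_mul_le_mul_left ?_ (by positivity : 0 < (2 * π) ^ 2)
  calc (2 * π) ^ 2 * ‖f.ft 0‖ = ‖(∫ η, f.ft η * M η)‖ := by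
        rw [hpair, norm_mul, norm_pow, norm_mul, norm_real, Complex.norm_ofNat,
          Real.norm_of_nonneg Real.pi_nonneg]
    _ ≤ ∫ η, ‖f.ft η‖ * ‖M η‖ := by
        simpa only [norm_mul] using norm_integral_le_integral_norm fun η ↦ f.ft η * M η
    _ ≤ (2 * π) ^ 2 * wnorm s f.ft * wnorm (-s) M :=
        f.memHs.integral_norm_mul_norm_le (memHs_schwartzMap (-s) M)
    _ = (2 * π) ^ 2 * (wnorm (-s) M * wnorm s f.ft) := by ring

/-- The product of `f ∈ H̃^s(Γ)` with the character `x ↦ e^{-ix·ξ}`, whose Fourier transform is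
the translate `f̂(· + ξ)`. -/
def modulate (f : HTildeElt s Γ) (ξ : R2) : HTildeElt s Γ where
  ft η := f.ft (η + ξ)
  cont := f.cont.comp (continuous_add_const ξ)
  mem := (f.memHs.comp_add_right ξ).2
  supp φ hφ hc hφΓ := by
    have hexp : ContDiff ℝ ∞ fun x : R2 ↦ cexp (-(I * rdot x ξ)) := by
      have hdot : ContDiff ℝ ∞ fun x : R2 ↦ rdot x ξ := by
        unfold rdot
        fun_prop
      exact (contDiff_const.mul (ofRealCLM.contDiff.comp hdot)).neg.cexp
    have hsupp := f.supp _ (hexp.mul hφ) hc.mul_left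
      (Set.subset_empty_iff.1 <| hφΓ ▸ Set.inter_subset_inter_left _ (tsupport_mul_subset_right))
    rw [← integral_add_right_eq_self _ ξ] at hsupp
    simpa only [testFT_exp_mul, add_sub_cancel_right] using hsupp

theorem exists_norm_ft_le (s : ℝ) (hΓ : Bornology.IsBounded Γ) :
    ∃ A, 0 ≤ A ∧ ∀ (f : HTildeElt s Γ) (ξ : R2),
      ‖f.ft ξ‖ ≤ A * (1 + ‖ξ‖ ^ 2) ^ (|s| / 2) * wnorm s f.ft := by
  obtain ⟨A, hA, hzero⟩ := exists_norm_ft_zero_le s hΓ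
  refine ⟨A * 2 ^ (|s| / 2), by positivity, fun f ξ ↦ ?_⟩
  calc ‖f.ft ξ‖ = ‖(f.modulate ξ).ft 0‖ := by simp only [modulate, zero_add]
    _ ≤ A * wnorm s (f.modulate ξ).ft := hzero _
    _ ≤ A * ((2 * (1 + ‖ξ‖ ^ 2)) ^ (|s| / 2) * wnorm s f.ft) := by
        gcongr
        exact f.memHs.wnorm_comp_add_right_le ξ
    _ = A * 2 ^ (|s| / 2) * (1 + ‖ξ‖ ^ 2) ^ (|s| / 2) * wnorm s f.ft := by
        rw [Real.mul_rpow two_pos.le (by positivity)]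
        ring

end HTildeElt

section FourierMultiplier

lemma mul_le_indicator_mul_add {α : Type*} {S : Set α} {m u : α → ℝ} {D B : ℝ}
    (hm : ∀ x, 0 ≤ m x) (hu : ∀ x, 0 ≤ u x) (hB : 0 ≤ B) (hnear : ∀ x ∈ S, u x ≤ D)
    (hfar : ∀ x ∉ S, m x ≤ B) (x : α) : m x * u x ≤ S.indicator m x * D + B * u x := by
  by_cases hx : x ∈ S
  · rw [Set.indicator_of_mem hx]
    exact le_add_of_le_of_nonneg (mul_le_mul_of_nonneg_left (hnear x hx) (hm x))
      (mul_nonneg hB (hu x))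
  · rw [Set.indicator_of_notMem hx, zero_mul, zero_add]
    exact mul_le_mul_of_nonneg_right (hfar x hx) (hu x)

lemma integrable_mul_and_integral_mul_le {α : Type*} [MeasurableSpace α] {μ : Measure α}
    {S : Set α} (hS : MeasurableSet S) {m u : α → ℝ} {D B : ℝ} (hm : ∀ x, 0 ≤ m x)
    (hu : ∀ x, 0 ≤ u x) (hB : 0 ≤ B) (hnear : ∀ x ∈ S, u x ≤ D)
    (hfar : ∀ x ∉ S, m x ≤ B) (hm_meas : AEStronglyMeasurable m μ) (hmS : IntegrableOn m S μ)
    (hu_int : Integrable u μ) :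
    Integrable (fun x ↦ m x * u x) μ ∧
      ∫ x, m x * u x ∂μ ≤ (∫ x in S, m x ∂μ) * D + B * ∫ x, u x ∂μ := by
  have hdom := mul_le_indicator_mul_add hm hu hB hnear hfar
  have hnear_int := (hmS.integrable_indicator hS).mul_const D
  have hfar_int := hu_int.const_mul B
  have hint : Integrable (fun x ↦ m x * u x) μ :=
    (hnear_int.add hfar_int).mono' (hm_meas.mul hu_int.aestronglyMeasurable)
      (.of_forall fun x ↦ (Real.norm_of_nonneg (mul_nonneg (hm x) (hu x))).trans_le (hdom x))
  refine ⟨hint, ?_⟩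
  calc ∫ x, m x * u x ∂μ ≤ ∫ x, (S.indicator m x * D + B * u x) ∂μ :=
        integral_mono hint (hnear_int.add hfar_int) hdom
    _ = (∫ x in S, m x ∂μ) * D + B * ∫ x, u x ∂μ := by
        rw [integral_add hnear_int hfar_int, integral_mul_const, integral_const_mul,
          integral_indicator hS]

variable {Γ : Set R2}

lemma HTildeElt.exists_norm_ft_le_of_norm_lt (s : ℝ) (hΓ : Bornology.IsBounded Γ) (R : ℝ) :
    ∃ A, 0 ≤ A ∧ ∀ (f : HTildeElt s Γ) (ξ : R2), ‖ξ‖ < R → ‖f.ft ξ‖ ≤ A * wnorm s f.ft := by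
  obtain ⟨A, hA, hbound⟩ := exists_norm_ft_le s hΓ
  refine ⟨A * (1 + R ^ 2) ^ (|s| / 2), by positivity, fun f ξ hξ ↦ (hbound f ξ).trans ?_⟩
  have : 0 ≤ wnorm s f.ft := wnorm_nonneg s f.ft
  gcongr

-- Near the origin the two Fourier transforms are bounded pointwise and `m` is integrated; away from
-- it `m` is bounded and the duality between `H^s` and `H^{-s}` applies.
theorem exists_integral_norm_mul_le_of_multiplier (s : ℝ) (hΓ : Bornology.IsBounded Γ)
    {m : R2 → ℂ} (hm : AEStronglyMeasurable m) {R B : ℝ} (hB : 0 ≤ B)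
    (hnear : IntegrableOn m (Metric.ball 0 R)) (hfar : ∀ ξ, R ≤ ‖ξ‖ → ‖m ξ‖ ≤ B) :
    ∃ C, 0 ≤ C ∧ ∀ (f : HTildeElt s Γ) (g : HTildeElt (-s) Γ),
      Integrable (fun ξ ↦ ‖m ξ‖ * (‖f.ft ξ‖ * ‖g.ft ξ‖)) ∧
        ∫ ξ, ‖m ξ‖ * (‖f.ft ξ‖ * ‖g.ft ξ‖) ≤ C * wnorm s f.ft * wnorm (-s) g.ft := by
  obtain ⟨A₁, hA₁, hf⟩ := HTildeElt.exists_norm_ft_le_of_norm_lt s hΓ R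
  obtain ⟨A₂, hA₂, hg⟩ := HTildeElt.exists_norm_ft_le_of_norm_lt (-s) hΓ R
  refine ⟨(∫ ξ in Metric.ball 0 R, ‖m ξ‖) * A₁ * A₂ + B * (2 * π) ^ 2, by positivity,
    fun f g ↦ ?_⟩
  have hf0 := wnorm_nonneg s f.ft
  obtain ⟨hint, hle⟩ := integrable_mul_and_integral_mul_le
    (m := fun ξ ↦ ‖m ξ‖) (u := fun ξ ↦ ‖f.ft ξ‖ * ‖g.ft ξ‖)
    (D := A₁ * wnorm s f.ft * (A₂ * wnorm (-s) g.ft)) Metric.isOpen_ball.measurableSet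
    (fun ξ ↦ by positivity) (fun ξ ↦ by positivity) hB
    (fun ξ hξ ↦ by
      rw [mem_ball_zero_iff] at hξ
      exact mul_le_mul (hf f ξ hξ) (hg g ξ hξ) (norm_nonneg _) (by positivity))
    (fun ξ hξ ↦ hfar ξ (by simpa using hξ))
    hm.norm hnear.norm (f.memHs.integrable_norm_mul_norm g.memHs)
  refine ⟨hint, ?_⟩
  calc ∫ ξ, ‖m ξ‖ * (‖f.ft ξ‖ * ‖g.ft ξ‖)
      ≤ (∫ ξ in Metric.ball 0 R, ‖m ξ‖) * (A₁ * wnorm s f.ft * (A₂ * wnorm (-s) g.ft)) +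
          B * ∫ ξ, ‖f.ft ξ‖ * ‖g.ft ξ‖ := hle
    _ ≤ (∫ ξ in Metric.ball 0 R, ‖m ξ‖) * (A₁ * wnorm s f.ft * (A₂ * wnorm (-s) g.ft)) +
          B * ((2 * π) ^ 2 * wnorm s f.ft * wnorm (-s) g.ft) := by
        gcongr
        exact f.memHs.integral_norm_mul_norm_le g.memHs
    _ = ((∫ ξ in Metric.ball 0 R, ‖m ξ‖) * A₁ * A₂ + B * (2 * π) ^ 2) * wnorm s f.ft *
          wnorm (-s) g.ft := by ring

end FourierMultiplier

section HelmholtzSymbol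

variable {k : ℝ}

lemma intervalIntegrable_inv_sqrt_abs_sub (k a b : ℝ) :
    IntervalIntegrable (fun y ↦ (√|y - k|)⁻¹) volume a b := by
  have hloc : LocallyIntegrable fun y : ℝ ↦ (√|y|)⁻¹ := by
    refine locallyIntegrable_of_norm_le_rpow (C := 1) (α := 1 / 2) (by simp)
      (by norm_num [finrank_self]) (.of_forall fun y ↦ ?_) (by fun_prop)
    rw [Real.norm_of_nonneg (by positivity), one_mul, Real.rpow_neg (norm_nonneg y),
      ← Real.sqrt_eq_rpow, Real.norm_eq_abs]
  have hint : IntervalIntegrable (fun y : ℝ ↦ (√|y|)⁻¹) volume (a - k) (b - k) :=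
    (hloc.integrableOn_isCompact isCompact_uIcc).intervalIntegrable
  simpa using hint.comp_sub_right k

@[fun_prop]
lemma measurable_g0hat (k : ℝ) : Measurable (g0hat k) := by
  unfold g0hat
  exact Measurable.ite (measurableSet_lt measurable_norm measurable_const) (by fun_prop)
    (by fun_prop)

lemma norm_g0hat (hk : 0 ≤ k) (ξ : R2) : ‖g0hat k ξ‖ = (√|‖ξ‖ ^ 2 - k ^ 2|)⁻¹ := by
  unfold g0hat
  split_ifs with hξ
  · have hsq : ‖ξ‖ ^ 2 ≤ k ^ 2 := by gcongr
    rw [norm_div, norm_I, norm_real, Real.norm_of_nonneg (Real.sqrt_nonneg _), abs_sub_comm,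
      abs_of_nonneg (sub_nonneg.2 hsq), one_div]
  · have hsq : k ^ 2 ≤ ‖ξ‖ ^ 2 := by
      rw [not_lt] at hξ
      gcongr
    rw [norm_div, norm_one, norm_real, Real.norm_of_nonneg (Real.sqrt_nonneg _),
      abs_of_nonneg (sub_nonneg.2 hsq), one_div]

lemma mul_inv_sqrt_abs_sq_sub_sq_le (hk : 0 ≤ k) {y : ℝ} (hy : 0 < y) :
    y * (√|y ^ 2 - k ^ 2|)⁻¹ ≤ √y * (√|y - k|)⁻¹ := by
  have hfactor : √|y ^ 2 - k ^ 2| = √(y + k) * √|y - k| := by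
    rw [← Real.sqrt_mul (by positivity), sq_sub_sq, abs_mul, abs_of_pos (by positivity)]
  calc y * (√|y ^ 2 - k ^ 2|)⁻¹ = √y * (√y / √(y + k)) * (√|y - k|)⁻¹ := by
        rw [hfactor, mul_inv, ← mul_div_assoc, Real.mul_self_sqrt hy.le, div_eq_mul_inv, mul_assoc]
    _ ≤ √y * 1 * (√|y - k|)⁻¹ := by
        gcongr
        exact div_le_one_of_le₀ (Real.sqrt_le_sqrt (by linarith)) (Real.sqrt_nonneg _)
    _ = √y * (√|y - k|)⁻¹ := by rw [mul_one]

lemma integrableOn_g0hat_ball (hk : 0 ≤ k) (R : ℝ) :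
    IntegrableOn (g0hat k) (Metric.ball 0 R) := by
  rw [IntegrableOn, ← integrable_norm_iff (by fun_prop), ← IntegrableOn]
  simp only [norm_g0hat hk]
  rw [integrableOn_fun_norm_addHaar volume (f := fun y ↦ (√|y ^ 2 - k ^ 2|)⁻¹)]
  have hmajor : IntegrableOn (fun y ↦ √R * (√|y - k|)⁻¹) (Set.Ioo 0 R) := by
    rcases le_or_gt R 0 with hR | hR
    · simp [Set.Ioo_eq_empty_of_le hR]
    · exact ((intervalIntegrable_iff_integrableOn_Ioo_of_le hR.le).1
        (intervalIntegrable_inv_sqrt_abs_sub k 0 R)).const_mul _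
  refine hmajor.mono' (by fun_prop) ((ae_restrict_iff' measurableSet_Ioo).2 (.of_forall ?_))
  rintro y ⟨hy0, hyR⟩
  rw [finrank_euclideanSpace_fin, pow_one, smul_eq_mul, Real.norm_of_nonneg (by positivity)]
  refine (mul_inv_sqrt_abs_sq_sub_sq_le hk hy0).trans ?_
  gcongr

lemma norm_mul_norm_g0hat_le_two (hk : 0 ≤ k) {ξ : R2} (hξ : 2 * k ≤ ‖ξ‖) :
    ‖ξ‖ * ‖g0hat k ξ‖ ≤ 2 := by
  have hsqrt : ‖ξ‖ / 2 ≤ √|‖ξ‖ ^ 2 - k ^ 2| :=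
    Real.le_sqrt_of_sq_le (le_trans (by nlinarith [norm_nonneg ξ]) (le_abs_self _))
  rw [norm_g0hat hk, ← div_eq_mul_inv]
  exact div_le_of_le_mul₀ (Real.sqrt_nonneg _) two_pos.le (by linarith)

end HelmholtzSymbol

section CurlForm

variable {Γ : Set R2} {k : ℝ}

lemma norm_curlFt_le (F G : R2 → ℂ) (ξ : R2) : ‖curlFt F G ξ‖ ≤ ‖ξ‖ * (‖F ξ‖ + ‖G ξ‖) := by
  have hcoord (i : Fin 2) : ‖(ξ i : ℂ)‖ ≤ ‖ξ‖ := by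
    rw [norm_real]
    exact PiLp.norm_apply_le ξ i
  calc ‖curlFt F G ξ‖ ≤ ‖(ξ 1 : ℂ)‖ * ‖F ξ‖ + ‖(ξ 0 : ℂ)‖ * ‖G ξ‖ := by
        rw [curlFt, ← norm_mul, ← norm_mul]
        exact norm_sub_le _ _
    _ ≤ ‖ξ‖ * (‖F ξ‖ + ‖G ξ‖) := by
        rw [mul_add]
        gcongr <;> exact hcoord _

/-- The integrand of `E(q,V)`, as a function of the Fourier transforms of `q` and of the two
components of `V`. -/
def Eintegrand (k : ℝ) (q G1 G2 : R2 → ℂ) : R2 → ℂ :=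
  Bintegrand k (fun η ↦ I * (η 1 : ℂ) * q η) (fun η ↦ -(I * (η 0 : ℂ) * q η)) G1 G2

-- The two sides agree at `ξ = 0` as well, since `curlFt` vanishes there.
lemma Eintegrand_apply (k : ℝ) (q G1 G2 : R2 → ℂ) (ξ : R2) :
    Eintegrand k q G1 G2 ξ =
      -k ^ 2 * (g0hat k ξ * (I * q ξ * starRingEnd ℂ (curlFt G1 G2 ξ))) := by
  have hdot : dotFt (fun η ↦ I * (η 1 : ℂ) * q η) (fun η ↦ -(I * (η 0 : ℂ) * q η)) ξ = 0 := by
    rw [dotFt]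
    ring
  have hcurl : curlFt (fun η ↦ I * (η 1 : ℂ) * q η) (fun η ↦ -(I * (η 0 : ℂ) * q η)) ξ =
      (‖ξ‖ ^ 2 : ℝ) * (I * q ξ) := by
    rw [curlFt, EuclideanSpace.real_norm_sq_eq, Fin.sum_univ_two]
    push_cast
    ring
  rw [Eintegrand, Bintegrand, hdot, hcurl]
  rcases eq_or_ne ξ 0 with rfl | hξ
  · simp [curlFt]
  · have hnorm : ((‖ξ‖ ^ 2 : ℝ) : ℂ) ≠ 0 := by
      exact_mod_cast pow_ne_zero 2 (norm_ne_zero_iff.2 hξ)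
    field_simp
    push_cast
    ring

lemma measurable_Eintegrand (k : ℝ) {q G1 G2 : R2 → ℂ} (hq : Measurable q)
    (hG1 : Measurable G1) (hG2 : Measurable G2) : Measurable (Eintegrand k q G1 G2) := by
  unfold Eintegrand Bintegrand dotFt curlFt
  fun_prop

lemma norm_Eintegrand_le (k : ℝ) (q G1 G2 : R2 → ℂ) (ξ : R2) :
    ‖Eintegrand k q G1 G2 ξ‖ ≤
      k ^ 2 * (‖(‖ξ‖ : ℂ) * g0hat k ξ‖ * (‖q ξ‖ * ‖G1 ξ‖) +
        ‖(‖ξ‖ : ℂ) * g0hat k ξ‖ * (‖q ξ‖ * ‖G2 ξ‖)) := by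
  calc _ = k ^ 2 * (‖g0hat k ξ‖ * (‖q ξ‖ * ‖curlFt G1 G2 ξ‖)) := by
        simp only [Eintegrand_apply, norm_mul, norm_neg, norm_pow, norm_real, norm_I,
          RCLike.norm_conj, one_mul, Real.norm_eq_abs, sq_abs]
    _ ≤ k ^ 2 * (‖g0hat k ξ‖ * (‖q ξ‖ * (‖ξ‖ * (‖G1 ξ‖ + ‖G2 ξ‖)))) := by
        gcongr
        exact norm_curlFt_le G1 G2 ξ
    _ = _ := by
        rw [norm_mul, norm_real, norm_norm]
        ring

lemma wnorm_c1_le_Xnorm (V : Xelt Γ) : wnorm (-(1 / 2)) V.c1.ft ≤ Xnorm V := by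
  refine Real.sqrt_le_sqrt ?_
  rw [XnormSq, HnormSq]
  linarith [wnormSq_nonneg (-(1 / 2)) V.c2.ft, wnormSq_nonneg (-(1 / 2)) (divFt V)]

lemma wnorm_c2_le_Xnorm (V : Xelt Γ) : wnorm (-(1 / 2)) V.c2.ft ≤ Xnorm V := by
  refine Real.sqrt_le_sqrt ?_
  rw [XnormSq, HnormSq]
  linarith [wnormSq_nonneg (-(1 / 2)) V.c1.ft, wnormSq_nonneg (-(1 / 2)) (divFt V)]

lemma exists_integral_norm_mul_g0hat_le (s : ℝ) (hΓ : Bornology.IsBounded Γ) (hk : 0 ≤ k) :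
    ∃ C, 0 ≤ C ∧ ∀ (f : HTildeElt s Γ) (g : HTildeElt (-s) Γ),
      Integrable (fun ξ ↦ ‖(‖ξ‖ : ℂ) * g0hat k ξ‖ * (‖f.ft ξ‖ * ‖g.ft ξ‖)) ∧
        ∫ ξ, ‖(‖ξ‖ : ℂ) * g0hat k ξ‖ * (‖f.ft ξ‖ * ‖g.ft ξ‖) ≤
          C * wnorm s f.ft * wnorm (-s) g.ft := by
  refine exists_integral_norm_mul_le_of_multiplier s hΓ (by fun_prop) (R := 2 * k) two_pos.le ?_
    fun ξ hξ ↦ ?_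
  · refine (integrableOn_g0hat_ball hk (2 * k)).bdd_mul (c := 2 * k) (by fun_prop)
      ((ae_restrict_iff' Metric.isOpen_ball.measurableSet).2 (.of_forall fun ξ hξ ↦ ?_))
    rw [norm_real, norm_norm]
    exact (mem_ball_zero_iff.1 hξ).le
  · rw [norm_mul, norm_real, norm_norm]
    exact norm_mul_norm_g0hat_le_two hk hξ

end CurlForm

theorem statement3_general (Γ : Set R2) (hΓ : Bornology.IsBounded Γ) (k : ℝ) (hk : 0 ≤ k) :
    ∃ C > 0, ∀ (q : HTildeElt (1 / 2 : ℝ) Γ) (V : Xelt Γ),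
      Integrable (Eintegrand k q.ft V.c1.ft V.c2.ft) ∧
      ‖Eform k q V‖ ≤ C * wnorm (1 / 2) q.ft * Xnorm V := by
  obtain ⟨C, hC, hmult⟩ := exists_integral_norm_mul_g0hat_le (1 / 2) hΓ hk
  refine ⟨k ^ 2 * (C + C) + 1, by positivity, fun q V ↦ ?_⟩
  obtain ⟨hint₁, hle₁⟩ := hmult q V.c1
  obtain ⟨hint₂, hle₂⟩ := hmult q V.c2
  have hdom := norm_Eintegrand_le k q.ft V.c1.ft V.c2.ft
  have hdom_int := (hint₁.add hint₂).const_mul (k ^ 2)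
  have hmeas := (measurable_Eintegrand k q.cont.measurable V.c1.cont.measurable
    V.c2.cont.measurable).aestronglyMeasurable (μ := volume)
  refine ⟨hdom_int.mono' hmeas (.of_forall hdom), ?_⟩
  have hq := wnorm_nonneg (1 / 2) q.ft
  have hV : 0 ≤ Xnorm V := Real.sqrt_nonneg _
  calc ‖Eform k q V‖
      ≤ k ^ 2 * ((∫ ξ, ‖(‖ξ‖ : ℂ) * g0hat k ξ‖ * (‖q.ft ξ‖ * ‖V.c1.ft ξ‖)) +
          ∫ ξ, ‖(‖ξ‖ : ℂ) * g0hat k ξ‖ * (‖q.ft ξ‖ * ‖V.c2.ft ξ‖)) := by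
        rw [← integral_add hint₁ hint₂, ← integral_const_mul]
        exact norm_integral_le_of_norm_le hdom_int (.of_forall hdom)
    _ ≤ k ^ 2 * (C * wnorm (1 / 2) q.ft * Xnorm V + C * wnorm (1 / 2) q.ft * Xnorm V) := by
        gcongr
        · exact hle₁.trans (by gcongr; exact wnorm_c1_le_Xnorm V)
        · exact hle₂.trans (by gcongr; exact wnorm_c2_le_Xnorm V)
    _ ≤ (k ^ 2 * (C + C) + 1) * wnorm (1 / 2) q.ft * Xnorm V := by
        linarith [mul_nonneg hq hV]

/-- `E(q,V) = B(curl⃗ q, V)` is a bounded sesquilinear form on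
`H̃^{1/2}(Γ) × X`: `|E(q,V)| ≤ C ‖q‖_{H̃^{1/2}(Γ)} ‖V‖_X`. -/
theorem statement3 (Γ : Set R2) (hΓ : IsLipschitzDomain Γ) (k : ℝ) (hk : 0 < k) :
    ∃ C > 0, ∀ (q : HTildeElt (1/2 : ℝ) Γ) (V : Xelt Γ),
      ‖Eform k q V‖ ≤ C * wnorm (1/2) q.ft * Xnorm V := by
  obtain ⟨C, hC, hE⟩ := statement3_general Γ hΓ.2.1 k hk.le
  exact ⟨C, hC, fun q V ↦ (hE q V).2⟩

end
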